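/- Assume (H1). Let λ_k ∈ (0,α) and suppose U_k := u_∞(·,·;λ_k) is a pulsating traveling front of (E) with limit ω_{k−1}(t) at x = −∞ and ω_k(t) at x = +∞, where ω_{k−1}, ω_k are T-periodic solutions of the ODE with 0 < ω_k(t) < ω_{k−1}(t). Then the x-independent entire solution (x,t) ↦ ω_k(t) is steeper than any entire solution w of (E) with 0 ≤ w(x,t) ≤ ω(α,t); moreover ω_k(t) = u_∞(x,t;ω_k(0)) for all (x,t) ∈ ℝ². -/

import Mathlib

/-!
Everything rests on three facts about equation (E), proved here by maximum principles alone.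

*One crossing.* If `W` is a solution between `0` and `ω(α,·)`, then `v = u₀ - W` is nonnegative on the
left of `0` and nonpositive on its right as `t → 0⁺`. This single change of sign persists: where
`v(x,t) < 0 < v(y,t)` with `x < y`, the product `-v(x,t) v(y,t)` satisfies a linear parabolic
inequality in the two space variables, and it vanishes on the diagonal, so it cannot become positive
(`LinSol.single_sign_change`, `IsHeavisideSol.crossing`).

*Passage to the limit.* Shifting in time and space turns `u₀` into `U_k`, and then, far to the right,
into `ω_k`. Hence a solution `V` exceeding `ω_k(t)` at `(x,t)` is at least `ω_k(t)` at all `(y,t)`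
with `y > x` (`ApproxSol.ge_right`). Since `ω_k` does not depend on `x`, the same applies to the
reflection of `V`, so `V(·,t) - ω_k(t)` has a constant sign for each `t`.

*Strong maximum principle.* With such a constant sign, a single contact between `V` and `ω_k` forces
`V ≡ ω_k` (`LinLimit.eq_zero`). The proof compares with Gaussian barriers on the approximating
solutions, so it holds for locally uniform limits of solutions without any regularity theory.

Applied to time shifts of an entire solution `w`, this gives the first alternative in the definition
of steepness whenever `w` touches `ω_k`; applied to `V = u_∞(·,·;ω_k(0))`, which touches `ω_k` at the
origin, it gives the second claim.
-/

open Real Filter Topology Set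

noncomputable section

/-- `u` is a classical solution of `u_t = u_xx + f(t,u)` on `ℝ × I`. -/
def IsSolOn (f : ℝ → ℝ → ℝ) (u : ℝ → ℝ → ℝ) (I : Set ℝ) : Prop :=
  ∃ ut ux uxx : ℝ → ℝ → ℝ,
    (∀ x : ℝ, ∀ t ∈ I, HasDerivAt (fun s => u x s) (ut x t) t) ∧
    (∀ x : ℝ, ∀ t ∈ I, HasDerivAt (fun y => u y t) (ux x t) x) ∧
    (∀ x : ℝ, ∀ t ∈ I, HasDerivAt (fun y => ux y t) (uxx x t) x) ∧
    ContinuousOn (fun p : ℝ × ℝ => ut p.1 p.2) (Set.univ ×ˢ I) ∧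
    ContinuousOn (fun p : ℝ × ℝ => ux p.1 p.2) (Set.univ ×ˢ I) ∧
    ContinuousOn (fun p : ℝ × ℝ => uxx p.1 p.2) (Set.univ ×ˢ I) ∧
    (∀ x : ℝ, ∀ t ∈ I, ut x t = uxx x t + f t (u x t))

/-- `u₁` is steeper than `u₂` (Definition 2.5). -/
def Steeper (T : ℝ) (u₁ u₂ : ℝ → ℝ → ℝ) : Prop :=
  ∀ (t' x₁ : ℝ) (k : ℤ), u₁ x₁ t' = u₂ x₁ (t' + k * T) →
    (∀ x t : ℝ, u₁ x (t + t') = u₂ x (t + t' + k * T)) ∨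
    deriv (fun y => u₁ y t') x₁ < deriv (fun y => u₂ y (t' + k * T)) x₁

/-- `ψ` is a `T`-periodic solution of the ODE `ω' = f(t,ω)`. -/
def IsPeriodicSol (f : ℝ → ℝ → ℝ) (T : ℝ) (ψ : ℝ → ℝ) : Prop :=
  (∀ t : ℝ, HasDerivAt ψ (f t (ψ t)) t) ∧ ∀ t : ℝ, ψ (t + T) = ψ t

/-- `ψ` is isolated from below w.r.t. the ODE. -/
def IsolatedFromBelow (f : ℝ → ℝ → ℝ) (T : ℝ) (ψ : ℝ → ℝ) : Prop :=
  ¬ ∃ φ : ℕ → ℝ → ℝ, (∀ n, IsPeriodicSol f T (φ n)) ∧ (∀ n t, φ n t < ψ t) ∧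
      TendstoUniformly φ ψ atTop

/-- `ψ` is stable from below w.r.t. the ODE. -/
def StableFromBelow (f : ℝ → ℝ → ℝ) (ψ : ℝ → ℝ) : Prop :=
  ∀ ε > 0, ∃ δ > 0, ∀ g : ℝ → ℝ, (∀ t : ℝ, HasDerivAt g (f t (g t)) t) →
    g 0 ∈ Set.Icc (ψ 0 - δ) (ψ 0) → ∀ t ≥ 0, |g t - ψ t| ≤ ε

/-- Hypothesis (H1). -/
def HypH1 (f : ℝ → ℝ → ℝ) (α : ℝ) (ωα : ℝ → ℝ) : Prop :=
  ∃ u : ℝ → ℝ → ℝ,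
    IsSolOn f u (Set.Ioi 0) ∧
    ContinuousOn (fun p : ℝ × ℝ => u p.1 p.2) (Set.univ ×ˢ Set.Ici 0) ∧
    HasCompactSupport (fun x => u x 0) ∧
    (∀ x : ℝ, 0 ≤ u x 0 ∧ u x 0 < α) ∧
    (∀ K : Set ℝ, IsCompact K → ∀ ε > 0, ∃ t₀ : ℝ, ∀ t ≥ t₀, ∀ x ∈ K, |u x t - ωα t| < ε)

/-- Hypothesis (H2). -/
def HypH2 (f : ℝ → ℝ → ℝ) (T α : ℝ) : Prop :=
  ∀ ψ : ℝ → ℝ, IsPeriodicSol f T ψ → ψ 0 ∈ Set.Ioo 0 α →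
    IsolatedFromBelow f T ψ → ¬ StableFromBelow f ψ →
    ∃ φ : ℕ → ℝ → ℝ,
      (∀ n, ContDiff ℝ 1 (φ n)) ∧
      (∀ n t, φ n (t + T) = φ n t) ∧
      (∀ n t, f t (φ n t) ≤ deriv (φ n) t) ∧
      (∀ n t, φ n t < ψ t) ∧
      TendstoUniformly φ ψ atTop

/-- The solution `ũ(·,·;a)` of (E) with Heaviside-type initial datum `α·H(a−x)`,
bounded between `0` and `ω(α,·)`. -/
def IsHeavisideSol (f : ℝ → ℝ → ℝ) (α a : ℝ) (ωα : ℝ → ℝ) (u : ℝ → ℝ → ℝ) : Prop :=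
  IsSolOn f u (Set.Ioi 0) ∧
  (∀ x : ℝ, ∀ t > 0, 0 ≤ u x t ∧ u x t ≤ ωα t) ∧
  ∀ K : Set ℝ, IsCompact K → a ∉ K → ∀ ε > 0, ∃ δ > 0, ∀ t ∈ Set.Ioo (0:ℝ) δ, ∀ x ∈ K,
    |u x t - α * (if 0 ≤ a - x then 1 else 0)| < ε

/-- `U(x,t) → ψ(t)` as `x → +∞`, locally uniformly in `t`. -/
def LimitAtPlusInf (U : ℝ → ℝ → ℝ) (ψ : ℝ → ℝ) : Prop :=
  ∀ K : Set ℝ, IsCompact K → ∀ ε > 0, ∃ M : ℝ, ∀ x ≥ M, ∀ t ∈ K, |U x t - ψ t| < ε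

/-- `U(x,t) → ψ(t)` as `x → −∞`, locally uniformly in `t`. -/
def LimitAtMinusInf (U : ℝ → ℝ → ℝ) (ψ : ℝ → ℝ) : Prop :=
  ∀ K : Set ℝ, IsCompact K → ∀ ε > 0, ∃ M : ℝ, ∀ x ≤ M, ∀ t ∈ K, |U x t - ψ t| < ε

/-- `U` connects `ωa` (at `x = −∞`) to `ωb` (at `x = +∞`). -/
def Connects (U : ℝ → ℝ → ℝ) (ωa ωb : ℝ → ℝ) : Prop :=
  LimitAtMinusInf U ωa ∧ LimitAtPlusInf U ωb

/-- A pulsating traveling front of (E) with speed `c`, limit `ωa` at `−∞`, `ωb` at `+∞`. -/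
def IsPulsatingFront (f : ℝ → ℝ → ℝ) (T : ℝ) (ωa ωb : ℝ → ℝ) (U : ℝ → ℝ → ℝ) (c : ℝ) :
    Prop :=
  IsSolOn f U Set.univ ∧
  (∃ L : ℝ, c = L / T ∧ ∀ x t : ℝ, U x t = U (x - L) (t + T)) ∧
  Connects U ωa ωb

/-- A propagating terrace of (E) connecting `0` to `ωα`. -/
def IsTerrace (f : ℝ → ℝ → ℝ) (T : ℝ) (ωα : ℝ → ℝ) (N : ℕ)
    (ω : ℕ → ℝ → ℝ) (U : ℕ → ℝ → ℝ → ℝ) (c : ℕ → ℝ) : Prop :=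
  1 ≤ N ∧
  (∀ k ≤ N, IsPeriodicSol f T (ω k)) ∧
  (∀ t, ω 0 t = ωα t) ∧ (∀ t, ω N t = 0) ∧
  (∀ k, k < N → ∀ t, ω (k + 1) t < ω k t) ∧
  (∀ k, 1 ≤ k → k ≤ N → IsPulsatingFront f T (ω (k - 1)) (ω k) (U k) (c k)) ∧
  0 ≤ c 1 ∧ (∀ k, 1 ≤ k → k < N → c k ≤ c (k + 1))

/-- A minimal propagating terrace (Definition 1.4). -/
def IsMinimalTerrace (f : ℝ → ℝ → ℝ) (T : ℝ) (ωα : ℝ → ℝ) (N : ℕ)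
    (ω : ℕ → ℝ → ℝ) (U : ℕ → ℝ → ℝ → ℝ) (c : ℕ → ℝ) : Prop :=
  IsTerrace f T ωα N ω U c ∧
  (∀ (N' : ℕ) (ψ : ℕ → ℝ → ℝ) (V : ℕ → ℝ → ℝ → ℝ) (c' : ℕ → ℝ),
      IsTerrace f T ωα N' ψ V c' → ∀ k ≤ N, ∃ j ≤ N', ∀ t, ω k t = ψ j t) ∧
  (∀ k, 1 ≤ k → k ≤ N → ∀ V : ℝ → ℝ → ℝ, IsSolOn f V Set.univ →
      Connects V (ω (k - 1)) (ω k) → Steeper T (U k) V)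


/-- `V` is the locally uniform limit of the shifted solutions `u(· + ℓ j, · + jT)`. -/
def IsULimit (u : ℝ → ℝ → ℝ) (ℓ : ℕ → ℝ) (T : ℝ) (V : ℝ → ℝ → ℝ) : Prop :=
  ∀ K : Set (ℝ × ℝ), IsCompact K → ∀ ε > 0, ∃ J : ℕ, ∀ j ≥ J, ∀ p ∈ K,
    |u (p.1 + ℓ j) (p.2 + (j : ℝ) * T) - V p.1 p.2| < ε

/-! ### Derivative tests and the weak minimum principle -/

lemma left_deriv_nonpos {φ : ℝ → ℝ} {d t : ℝ} (h : HasDerivAt φ d t)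
    (hm : ∀ᶠ s in 𝓝[<] t, φ t ≤ φ s) : d ≤ 0 := by
  have h1 : Tendsto (slope φ t) (𝓝[<] t) (𝓝 d) := (hasDerivAt_iff_tendsto_slope.1 h).mono_left
    (nhdsWithin_mono t (fun s (hs : s < t) => (ne_of_lt hs : s ≠ t)))
  refine le_of_tendsto h1 ?_
  filter_upwards [hm, self_mem_nhdsWithin] with s hs hst
  have hst' : s < t := hst
  rw [slope_def_field]
  exact div_nonpos_of_nonneg_of_nonpos (by linarith) (by linarith)

lemma second_deriv_nonneg {φ φ' : ℝ → ℝ} {d x : ℝ} (h : ∀ y, HasDerivAt φ (φ' y) y)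
    (h' : HasDerivAt φ' d x) (hm : IsLocalMin φ x) : 0 ≤ d := by
  by_contra hd
  push Not at hd
  have e : deriv φ = φ' := funext fun y => (h y).deriv
  have hmax : IsLocalMax φ x := by
    apply isLocalMax_of_deriv_deriv_neg
    · rw [e, h'.deriv]; exact hd
    · exact hm.deriv_eq_zero
    · exact (h x).continuousAt
  have hc : φ =ᶠ[𝓝 x] fun _ => φ x := by
    filter_upwards [hm, hmax] with y h1 h2 using le_antisymm h2 h1
  have h2 : φ' =ᶠ[𝓝 x] fun _ => (0 : ℝ) := by
    have := hc.deriv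
    rw [e] at this
    simpa using this
  have := h'.unique ((hasDerivAt_const x (0 : ℝ)).congr_of_eventuallyEq h2)
  linarith

/-- The weak minimum principle on `ℝ × [s, t₁]` for functions bounded below: the differential
inequality is only needed where the function is negative. -/
lemma min_principle {C N s t₁ : ℝ} {D Dt Dx Dxx : ℝ → ℝ → ℝ} (hC : 0 ≤ C) (hst : s ≤ t₁)
    (ht : ∀ x, ∀ t ∈ Icc s t₁, HasDerivAt (fun τ => D x τ) (Dt x t) t)
    (hx : ∀ x, ∀ t ∈ Icc s t₁, HasDerivAt (fun y => D y t) (Dx x t) x)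
    (hxx : ∀ x, ∀ t ∈ Icc s t₁, HasDerivAt (fun y => Dx y t) (Dxx x t) x)
    (hc : ContinuousOn (fun p : ℝ × ℝ => D p.1 p.2) (univ ×ˢ Icc s t₁))
    (hN : ∀ x, ∀ t ∈ Icc s t₁, -N ≤ D x t)
    (h0 : ∀ x, 0 ≤ D x s)
    (hD : ∀ x, ∀ t ∈ Icc s t₁, D x t < 0 → Dxx x t + C * D x t ≤ Dt x t) (x₁ : ℝ) :
    0 ≤ D x₁ t₁ := by
  by_contra hneg
  push Not at hneg
  -- The perturbation `F` of the damped `D` is coercive in `x`, so its minimum is attained.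
  set E : ℝ → ℝ := fun t => exp (-(C + 1) * (t - s)) with hE
  have hEpos : ∀ t, 0 < E t := fun t => exp_pos _
  have hEle : ∀ t, s ≤ t → E t ≤ 1 := by
    intro t h
    apply exp_le_one_iff.2
    nlinarith
  set S := 1 + x₁ ^ 2 + 4 * (t₁ - s) with hS
  have hSpos : 0 < S := by nlinarith [sq_nonneg x₁]
  set ε := -(E t₁ * D x₁ t₁) / (2 * S) with hε
  have hεpos : 0 < ε := by
    apply div_pos _ (by linarith)
    nlinarith [hEpos t₁]
  set F : ℝ → ℝ → ℝ := fun x t => E t * D x t + ε * (1 + x ^ 2 + 4 * (t - s)) with hF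
  have hF1 : F x₁ t₁ < 0 := by
    have : ε * S = -(E t₁ * D x₁ t₁) / 2 := by rw [hε]; field_simp
    have h3 : E t₁ * D x₁ t₁ < 0 := by nlinarith [hEpos t₁]
    simp only [hF]
    rw [← hS]
    linarith
  have hNpos : 0 < N := by
    have := hN x₁ t₁ ⟨hst, le_rfl⟩
    linarith
  set R := |x₁| + N / ε + 1 with hR
  have hNε : 0 < N / ε := by positivity
  have hRpos : 1 ≤ R := by have := abs_nonneg x₁; linarith
  have hRN : N ≤ ε * R ^ 2 := by
    have h1 : N / ε ≤ R := by have := abs_nonneg x₁; linarith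
    have h2 : N ≤ ε * R := by rwa [div_le_iff₀' hεpos] at h1
    nlinarith
  have hcF : ContinuousOn (fun p : ℝ × ℝ => F p.1 p.2) (Icc (-R) R ×ˢ Icc s t₁) := by
    simp only [hF, hE]
    have h1 := hc.mono (prod_mono (subset_univ (Icc (-R) R)) (le_refl (Icc s t₁)))
    fun_prop
  have hx1 : |x₁| ≤ R := by linarith
  obtain ⟨⟨x₀, t₀⟩, ⟨hx0, ht0⟩, hmin⟩ := (isCompact_Icc.prod isCompact_Icc).exists_isMinOn
    ⟨(x₁, t₁), ⟨abs_le.1 hx1, ⟨hst, le_rfl⟩⟩⟩ hcF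
  have hmin' : ∀ y ∈ Icc (-R) R, ∀ τ ∈ Icc s t₁, F x₀ t₀ ≤ F y τ :=
    fun y hy τ hτ => hmin (show (y, τ) ∈ Icc (-R) R ×ˢ Icc s t₁ from ⟨hy, hτ⟩)
  simp only at hx0 ht0
  have hF0 : F x₀ t₀ < 0 := lt_of_le_of_lt (hmin' x₁ (abs_le.1 hx1) t₁ ⟨hst, le_rfl⟩) hF1
  have hpen : 0 < ε * (1 + x₀ ^ 2 + 4 * (t₀ - s)) := by
    have := ht0.1
    apply mul_pos hεpos; nlinarith [sq_nonneg x₀]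
  have hED : E t₀ * D x₀ t₀ < 0 := by simp only [hF] at hF0; linarith
  have hD0 : D x₀ t₀ < 0 := by
    by_contra h
    push Not at h
    have := mul_nonneg (hEpos t₀).le h
    linarith
  have hs0 : s < t₀ := by
    rcases eq_or_lt_of_le ht0.1 with h | h
    · have := h0 x₀
      rw [h] at this; linarith
    · exact h
  have hxR : x₀ ^ 2 < R ^ 2 := by
    by_contra h
    push Not at h
    have h1 : -N ≤ E t₀ * D x₀ t₀ := by
      have := hN x₀ t₀ ht0
      nlinarith [hEle t₀ ht0.1, hEpos t₀]
    have h2 : N ≤ ε * x₀ ^ 2 := hRN.trans (by nlinarith)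
    simp only [hF] at hF0
    nlinarith [ht0.1]
  have hxR' := abs_lt.1 (abs_lt_of_sq_lt_sq hxR (by linarith))
  have d1 : HasDerivAt (fun τ => F x₀ τ) (E t₀ * (Dt x₀ t₀ - (C + 1) * D x₀ t₀) + 4 * ε) t₀ := by
    have hEd : HasDerivAt E (E t₀ * (-(C + 1))) t₀ := by
      have := ((((hasDerivAt_id t₀).sub_const s).const_mul (-(C + 1)))).exp
      simpa [hE] using this
    have := (hEd.mul (ht x₀ t₀ ht0)).add
      ((((((hasDerivAt_id t₀).sub_const s).const_mul 4)).const_add (1 + x₀ ^ 2)).const_mul ε)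
    refine this.congr_deriv ?_
    ring
  have e1 := left_deriv_nonpos d1 (by
    filter_upwards [Ioo_mem_nhdsLT hs0] with τ hτ
    exact hmin' x₀ hx0 τ ⟨hτ.1.le, hτ.2.le.trans ht0.2⟩)
  have d2 : ∀ y, HasDerivAt (fun y => F y t₀) (E t₀ * Dx y t₀ + ε * (2 * y)) y := by
    intro y
    have := ((hx y t₀ ht0).const_mul (E t₀)).add
      ((((hasDerivAt_pow 2 y).const_add 1).add_const (4 * (t₀ - s))).const_mul ε)
    refine this.congr_deriv ?_
    simp
  have d3 : HasDerivAt (fun y => E t₀ * Dx y t₀ + ε * (2 * y)) (E t₀ * Dxx x₀ t₀ + ε * 2) x₀ := by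
    have := ((hxx x₀ t₀ ht0).const_mul (E t₀)).add
      (((hasDerivAt_id x₀).const_mul 2).const_mul ε)
    refine this.congr_deriv ?_
    simp
  have e2 := second_deriv_nonneg d2 d3 (by
    filter_upwards [Ioo_mem_nhds hxR'.1 hxR'.2] with y hy
    exact hmin' y ⟨hy.1.le, hy.2.le⟩ t₀ ht0)
  have e3 := hD x₀ t₀ ht0 hD0
  have e4 := mul_le_mul_of_nonneg_left e3 (hEpos t₀).le
  nlinarith

/-! ### The heat kernel -/

/-- The one-dimensional heat kernel `τ^(-1/2) exp (-x²/(4τ))`, up to a constant factor; it is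
meaningful only for `τ > 0`. -/
def heatK (x τ : ℝ) : ℝ := exp (-(log τ) / 2 - x ^ 2 / (4 * τ))

lemma heatK_pos (x τ : ℝ) : 0 < heatK x τ := exp_pos _

lemma heatK_t (x : ℝ) {τ : ℝ} (h : 0 < τ) : HasDerivAt (fun σ => heatK x σ)
    ((x ^ 2 / (4 * τ ^ 2) - 1 / (2 * τ)) * heatK x τ) τ := by
  have h1 : HasDerivAt (fun σ : ℝ => -(log σ) / 2 - x ^ 2 / (4 * σ))
      (-(τ⁻¹) / 2 - (0 * (4 * τ) - x ^ 2 * (4 * 1)) / (4 * τ) ^ 2) τ :=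
    ((hasDerivAt_log h.ne').neg.div_const 2).sub
      ((hasDerivAt_const τ (x ^ 2)).div ((hasDerivAt_id τ).const_mul 4) (by positivity))
  refine h1.exp.congr_deriv ?_
  rw [heatK]
  field_simp
  ring

lemma heatK_x (x : ℝ) {τ : ℝ} (h : 0 < τ) : HasDerivAt (fun y => heatK y τ)
    (-x / (2 * τ) * heatK x τ) x := by
  have h1 : HasDerivAt (fun y : ℝ => -(log τ) / 2 - y ^ 2 / (4 * τ))
      (-(((2 : ℕ) : ℝ) * x ^ (2 - 1) / (4 * τ))) x :=
    ((hasDerivAt_pow 2 x).div_const (4 * τ)).const_sub _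
  refine h1.exp.congr_deriv ?_
  rw [heatK]
  simp
  field_simp
  ring

lemma heatK_xx (x : ℝ) {τ : ℝ} (h : 0 < τ) : HasDerivAt (fun y => -y / (2 * τ) * heatK y τ)
    ((x ^ 2 / (4 * τ ^ 2) - 1 / (2 * τ)) * heatK x τ) x := by
  refine (((hasDerivAt_id x).neg.div_const (2 * τ)).mul (heatK_x x h)).congr_deriv ?_
  simp
  field_simp
  ring

lemma heatK_anti {x y τ : ℝ} (h : 0 < τ) (hxy : |x| ≤ |y|) : heatK y τ ≤ heatK x τ := by
  apply exp_le_exp.2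
  have := sq_le_sq.2 hxy
  gcongr

lemma heatK_cont {X : Type*} [TopologicalSpace X] {S : Set X} {g k : X → ℝ}
    (hg : ContinuousOn g S) (hk : ContinuousOn k S) (hpos : ∀ q ∈ S, 0 < k q) :
    ContinuousOn (fun q => heatK (g q) (k q)) S := by
  unfold heatK
  apply ContinuousOn.rexp
  apply ContinuousOn.sub
  · exact (ContinuousOn.log hk (fun q hq => (hpos q hq).ne')).neg.div_const 2
  · exact (hg.pow 2).div (continuousOn_const.mul hk)
      (fun q hq => mul_ne_zero four_ne_zero (hpos q hq).ne')

/-! ### Linear equations: barriers and the strong maximum principle -/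

/-- `d` is a bounded classical solution on `ℝ × (a, ∞)` of a linear equation `d_t = d_xx + c d`
with `|c| ≤ C`; the coefficient is hidden in the inequality `|d_t - d_xx| ≤ C |d|`. -/
structure LinSol (C M a : ℝ) (d dt dx dxx : ℝ → ℝ → ℝ) : Prop where
  ht : ∀ x t, a < t → HasDerivAt (fun τ => d x τ) (dt x t) t
  hx : ∀ x t, a < t → HasDerivAt (fun y => d y t) (dx x t) x
  hxx : ∀ x t, a < t → HasDerivAt (fun y => dx y t) (dxx x t) x
  cont : ContinuousOn (fun p : ℝ × ℝ => d p.1 p.2) (univ ×ˢ Ioi a)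
  bdd : ∀ x t, a < t → |d x t| ≤ M
  eq : ∀ x t, a < t → |dt x t - dxx x t| ≤ C * |d x t|

lemma LinSol.neg {C M a : ℝ} {d dt dx dxx : ℝ → ℝ → ℝ} (h : LinSol C M a d dt dx dxx) :
    LinSol C M a (fun x t => -d x t) (fun x t => -dt x t) (fun x t => -dx x t)
      (fun x t => -dxx x t) where
  ht x t ha := (h.ht x t ha).neg
  hx x t ha := (h.hx x t ha).neg
  hxx x t ha := (h.hxx x t ha).neg
  cont := h.cont.neg
  bdd x t ha := by rw [abs_neg]; exact h.bdd x t ha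
  eq x t ha := by
    rw [abs_neg, show -dt x t - -dxx x t = -(dt x t - dxx x t) by ring, abs_neg]
    exact h.eq x t ha

/-- Comparison from below with `e^(-C(t-s)) A - e^(C(t-s)) B`, where `A = A₀ · (heat kernel)` and
`B = β₀ + β₁ (x² + 2(t-s))` are nonnegative solutions of the heat equation. -/
lemma LinSol.barrier {C M a : ℝ} {d dt dx dxx : ℝ → ℝ → ℝ} (h : LinSol C M a d dt dx dxx)
    (hC : 0 ≤ C) {s t₁ : ℝ} (has : a < s) (hst : s ≤ t₁) {A₀ z τ₀ β₀ β₁ : ℝ}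
    (hA : 0 ≤ A₀) (hτ : 0 < τ₀) (hβ₀ : 0 ≤ β₀) (hβ₁ : 0 ≤ β₁)
    (hinit : ∀ x, A₀ * heatK (x - z) τ₀ - (β₀ + β₁ * x ^ 2) ≤ d x s) (x₁ : ℝ) :
    exp (-C * (t₁ - s)) * (A₀ * heatK (x₁ - z) (τ₀ + (t₁ - s)))
      - exp (C * (t₁ - s)) * (β₀ + β₁ * (x₁ ^ 2 + 2 * (t₁ - s))) ≤ d x₁ t₁ := by
  set K2 : ℝ → ℝ → ℝ := fun x t => ((x - z) ^ 2 / (4 * (τ₀ + (t - s)) ^ 2)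
    - 1 / (2 * (τ₀ + (t - s)))) * heatK (x - z) (τ₀ + (t - s)) with hK2
  set A : ℝ → ℝ → ℝ := fun x t => A₀ * heatK (x - z) (τ₀ + (t - s)) with hAdef
  set B : ℝ → ℝ → ℝ := fun x t => β₀ + β₁ * (x ^ 2 + 2 * (t - s)) with hBdef
  set Em : ℝ → ℝ := fun t => exp (-C * (t - s)) with hEm
  set Ep : ℝ → ℝ := fun t => exp (C * (t - s)) with hEp
  have hAnn : ∀ x t, 0 ≤ A x t := fun x t => mul_nonneg hA (heatK_pos _ _).le
  have hBnn : ∀ x t, s ≤ t → 0 ≤ B x t := by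
    intro x t hts
    have : 0 ≤ x ^ 2 + 2 * (t - s) := by nlinarith [sq_nonneg x]
    positivity
  have hEmd : ∀ t, HasDerivAt Em (Em t * (-C)) t := by
    intro t
    have := ((((hasDerivAt_id t).sub_const s).const_mul (-C))).exp
    simpa [hEm] using this
  have hEpd : ∀ t, HasDerivAt Ep (Ep t * C) t := by
    intro t
    have := ((((hasDerivAt_id t).sub_const s).const_mul C)).exp
    simpa [hEp] using this
  have key := min_principle (C := C) (N := M + A₀ * exp (-(log τ₀) / 2)) (s := s) (t₁ := t₁)
    (D := fun x t => d x t - (Em t * A x t - Ep t * B x t))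
    (Dt := fun x t => dt x t - ((Em t * (-C) * A x t + Em t * (A₀ * K2 x t))
      - (Ep t * C * B x t + Ep t * (2 * β₁))))
    (Dx := fun x t => dx x t - (Em t * (A₀ * (-(x - z) / (2 * (τ₀ + (t - s)))
      * heatK (x - z) (τ₀ + (t - s)))) - Ep t * (β₁ * (2 * x))))
    (Dxx := fun x t => dxx x t - (Em t * (A₀ * K2 x t) - Ep t * (β₁ * 2)))
    hC hst ?_ ?_ ?_ ?_ ?_ ?_ ?_ x₁
  · simpa only [sub_nonneg] using key
  · intro x t ⟨h1, h2⟩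
    have hp : 0 < τ₀ + (t - s) := by linarith
    have hk : HasDerivAt (fun τ => heatK (x - z) (τ₀ + (τ - s))) (K2 x t) t := by
      have := (heatK_t (x - z) hp).comp t (((hasDerivAt_id t).sub_const s).const_add τ₀)
      simpa [hK2, Function.comp_def] using this
    have hB : HasDerivAt (fun τ => B x τ) (2 * β₁) t := by
      have := ((((((hasDerivAt_id t).sub_const s).const_mul 2)).const_add
        (x ^ 2)).const_mul β₁).const_add β₀
      refine this.congr_deriv ?_
      ring
    exact (h.ht x t (by linarith)).sub
      (((hEmd t).mul (hk.const_mul A₀)).sub ((hEpd t).mul hB))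
  · intro x t ⟨h1, h2⟩
    have hp : 0 < τ₀ + (t - s) := by linarith
    have hk := (heatK_x (x - z) hp).comp x ((hasDerivAt_id x).sub_const z)
    have hB : HasDerivAt (fun y => B y t) (β₁ * (2 * x)) x := by
      have := (((hasDerivAt_pow 2 x).add_const (2 * (t - s))).const_mul β₁).const_add β₀
      refine this.congr_deriv ?_
      simp
    refine ((h.hx x t (by linarith)).sub
      (((hk.const_mul A₀).const_mul (Em t)).sub (hB.const_mul (Ep t)))).congr_deriv ?_
    simp
  · intro x t ⟨h1, h2⟩
    have hp : 0 < τ₀ + (t - s) := by linarith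
    have hk := (heatK_xx (x - z) hp).comp x ((hasDerivAt_id x).sub_const z)
    refine ((h.hxx x t (by linarith)).sub
      (((hk.const_mul A₀).const_mul (Em t)).sub
        ((((hasDerivAt_id x).const_mul 2).const_mul β₁).const_mul (Ep t)))).congr_deriv ?_
    simp [hK2]
  · have c1 : ContinuousOn (fun p : ℝ × ℝ => d p.1 p.2) (univ ×ˢ Icc s t₁) :=
      h.cont.mono (prod_mono le_rfl (fun t ht => lt_of_lt_of_le has ht.1))
    have c2 : ContinuousOn (fun p : ℝ × ℝ => A p.1 p.2) (univ ×ˢ Icc s t₁) := by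
      refine continuousOn_const.mul (heatK_cont (by fun_prop) (by fun_prop) ?_)
      rintro ⟨x, t⟩ ⟨-, h1, h2⟩
      simp only at h1 ⊢
      linarith
    have c3 : ContinuousOn (fun p : ℝ × ℝ => B p.1 p.2) (univ ×ˢ Icc s t₁) := by
      simp only [hBdef]; fun_prop
    have c4 : ContinuousOn (fun p : ℝ × ℝ => Em p.2) (univ ×ˢ Icc s t₁) := by
      simp only [hEm]; fun_prop
    have c5 : ContinuousOn (fun p : ℝ × ℝ => Ep p.2) (univ ×ˢ Icc s t₁) := by
      simp only [hEp]; fun_prop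
    exact c1.sub ((c4.mul c2).sub (c5.mul c3))
  · intro x t ⟨h1, h2⟩
    have b1 := (abs_le.1 (h.bdd x t (by linarith))).1
    have b2 : Em t ≤ 1 := by
      apply exp_le_one_iff.2
      nlinarith
    have b3 : A x t ≤ A₀ * exp (-(log τ₀) / 2) := by
      apply mul_le_mul_of_nonneg_left _ hA
      apply exp_le_exp.2
      have l1 : log τ₀ ≤ log (τ₀ + (t - s)) := log_le_log hτ (by linarith)
      have l2 : 0 ≤ (x - z) ^ 2 / (4 * (τ₀ + (t - s))) := by
        apply div_nonneg (sq_nonneg _); linarith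
      linarith
    have b4 : Em t * A x t ≤ A x t := mul_le_of_le_one_left (hAnn x t) b2
    have b5 : 0 ≤ Ep t * B x t := mul_nonneg (exp_pos _).le (hBnn x t h1)
    linarith
  · intro x
    have := hinit x
    simp only [hEm, hEp, hAdef, hBdef, sub_self, mul_zero, exp_zero, one_mul, add_zero]
    linarith
  · intro x t ⟨h1, h2⟩ hneg
    have b1 := h.eq x t (by linarith)
    have b2 : 0 ≤ Em t * A x t := mul_nonneg (exp_pos _).le (hAnn x t)
    have b3 : 0 ≤ Ep t * B x t := mul_nonneg (exp_pos _).le (hBnn x t h1)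
    have b4 := (abs_le.1 b1).1
    have b5 : C * d x t - 2 * (C * (Em t * A x t)) ≤ -(C * |d x t|) := by
      rcases abs_cases (d x t) with ⟨e, _⟩ | ⟨e, _⟩
      · rw [e]; nlinarith
      · rw [e]; nlinarith
    nlinarith

/-- `D` is the locally uniform limit of functions `d j` which, for large `j`, are bounded solutions
of linear equations on any half-plane `t > a`, with constants independent of `j` and `a`. -/
def LinLimit (C M : ℝ) (d : ℕ → ℝ → ℝ → ℝ) (D : ℝ → ℝ → ℝ) : Prop :=
  (∀ a : ℝ, ∃ J : ℕ, ∀ j ≥ J, ∃ dt dx dxx, LinSol C M a (d j) dt dx dxx) ∧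
  ∀ K : Set (ℝ × ℝ), IsCompact K → ∀ ε > 0, ∃ J : ℕ, ∀ j ≥ J, ∀ p ∈ K,
    |d j p.1 p.2 - D p.1 p.2| < ε

lemma LinLimit.neg {C M : ℝ} {d : ℕ → ℝ → ℝ → ℝ} {D : ℝ → ℝ → ℝ} (h : LinLimit C M d D) :
    LinLimit C M (fun j x t => -d j x t) (fun x t => -D x t) := by
  refine ⟨fun a => ?_, fun K hK ε hε => ?_⟩
  · obtain ⟨J, hJ⟩ := h.1 a
    refine ⟨J, fun j hj => ?_⟩
    obtain ⟨dt, dx, dxx, hl⟩ := hJ j hj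
    exact ⟨_, _, _, hl.neg⟩
  · obtain ⟨J, hJ⟩ := h.2 K hK ε hε
    refine ⟨J, fun j hj p hp => ?_⟩
    rw [show -d j p.1 p.2 - -D p.1 p.2 = -(d j p.1 p.2 - D p.1 p.2) by ring, abs_neg]
    exact hJ j hj p hp

/-- If `D(·,s) ≥ 0` then the approximants are bounded below at time `s` by any prescribed
`-(β₀ + β₁ x²)`: near the origin by uniform convergence, far away by boundedness. -/
lemma LinLimit.lower_bound {C M : ℝ} {d : ℕ → ℝ → ℝ → ℝ} {D : ℝ → ℝ → ℝ} (h : LinLimit C M d D)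
    {s : ℝ} (hs : ∀ x, 0 ≤ D x s) {β₀ β₁ : ℝ} (hβ₀ : 0 < β₀) (hβ₁ : 0 < β₁) :
    ∃ J : ℕ, ∀ j ≥ J, ∀ x, -(β₀ + β₁ * x ^ 2) ≤ d j x s := by
  obtain ⟨J₁, hJ₁⟩ := h.1 (s - 1)
  set R := |M| / β₁ + 1 with hR
  obtain ⟨J₂, hJ₂⟩ := h.2 (Icc (-R) R ×ˢ {s}) (isCompact_Icc.prod isCompact_singleton) β₀ hβ₀
  refine ⟨max J₁ J₂, fun j hj x => ?_⟩
  obtain ⟨dt, dx, dxx, hl⟩ := hJ₁ j ((le_max_left _ _).trans hj)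
  rcases le_or_gt |x| R with hx | hx
  · have h1 := hJ₂ j ((le_max_right _ _).trans hj) (x, s) ⟨abs_le.1 hx, rfl⟩
    have h2 := (abs_lt.1 h1).1
    have h3 := hs x
    simp only at h2
    nlinarith [sq_nonneg x]
  · have h1 := (abs_le.1 (hl.bdd x s (by linarith))).1
    have h4 : 0 ≤ |M| / β₁ := by positivity
    have h2 : |M| ≤ β₁ * x ^ 2 := by
      have h3 : |M| / β₁ ≤ x ^ 2 := by
        rw [← sq_abs x]
        nlinarith
      rwa [div_le_iff₀' hβ₁] at h3
    have := le_abs_self M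
    linarith

lemma LinLimit.nonneg {C M : ℝ} {d : ℕ → ℝ → ℝ → ℝ} {D : ℝ → ℝ → ℝ} (h : LinLimit C M d D)
    (hC : 0 ≤ C) {s t : ℝ} (hst : s ≤ t) (hs : ∀ x, 0 ≤ D x s) (x : ℝ) : 0 ≤ D x t := by
  by_contra hneg
  push Not at hneg
  set q := exp (C * (t - s)) * (1 + (x ^ 2 + 2 * (t - s))) with hq
  have hqpos : 0 < q := by
    apply mul_pos (exp_pos _); nlinarith [sq_nonneg x]
  set β := -D x t / (2 * q) with hβ
  have hβpos : 0 < β := div_pos (by linarith) (by linarith)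
  have hβq : β * q = -D x t / 2 := by rw [hβ]; field_simp
  obtain ⟨J₀, hJ₀⟩ := h.1 (s - 1)
  obtain ⟨J₁, hJ₁⟩ := h.lower_bound hs hβpos hβpos
  obtain ⟨J₂, hJ₂⟩ := h.2 {(x, t)} isCompact_singleton (-D x t / 2) (by linarith)
  set j := max J₀ (max J₁ J₂) with hj
  obtain ⟨dt, dx, dxx, hl⟩ := hJ₀ j (le_max_left _ _)
  have h1 := hJ₁ j ((le_max_left _ _).trans (le_max_right _ _))
  have h2 := hJ₂ j ((le_max_right _ _).trans (le_max_right _ _)) (x, t) rfl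
  have h3 := hl.barrier hC (show s - 1 < s by linarith) hst (A₀ := 0) (z := 0) le_rfl one_pos
    hβpos.le hβpos.le (fun y => by simpa using h1 y) x
  have h4 := (abs_lt.1 h2).2
  simp only at h4
  have h5 : exp (C * (t - s)) * (β + β * (x ^ 2 + 2 * (t - s))) = β * q := by rw [hq]; ring
  rw [h5] at h3
  simp only [zero_mul, mul_zero] at h3
  linarith

lemma heatK_small {ρ : ℝ} (hρ : 0 < ρ) {ε : ℝ} (hε : 0 < ε) :
    ∃ τ, 0 < τ ∧ τ ≤ 1 ∧ heatK ρ τ ≤ ε := by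
  -- `e^(ρ²/(4τ)) ≥ ρ²/(4τ)` bounds the kernel by `4 √τ / ρ²`; put `τ = r²`.
  set r := min 1 (ε * ρ ^ 2 / 4) with hr
  have hrpos : 0 < r := lt_min one_pos (by positivity)
  have hr1 : r ≤ 1 := min_le_left _ _
  have hr2 : r ≤ ε * ρ ^ 2 / 4 := min_le_right _ _
  refine ⟨r ^ 2, by positivity, by nlinarith, ?_⟩
  rw [heatK, log_pow, sub_eq_add_neg, exp_add, exp_neg]
  have e1 : -(((2 : ℕ) : ℝ) * log r) / 2 = -log r := by push_cast; ring
  rw [e1, exp_neg, exp_log hrpos, ← mul_inv]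
  have h1 : ρ ^ 2 / (4 * r ^ 2) ≤ exp (ρ ^ 2 / (4 * r ^ 2)) := by
    have := add_one_le_exp (ρ ^ 2 / (4 * r ^ 2)); linarith
  have h2 : ε⁻¹ ≤ r * exp (ρ ^ 2 / (4 * r ^ 2)) := by
    calc ε⁻¹ ≤ r * (ρ ^ 2 / (4 * r ^ 2)) := by
          rw [inv_le_iff_one_le_mul₀ hε]
          have : r * (ρ ^ 2 / (4 * r ^ 2)) * ε = (ε * ρ ^ 2 / 4) / r := by field_simp
          rw [this, le_div_iff₀ hrpos]; linarith
      _ ≤ _ := by gcongr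
  exact inv_le_of_inv_le₀ hε h2

/-- The strong maximum principle, in a form that survives locally uniform limits. -/
lemma LinLimit.pos {C M : ℝ} {d : ℕ → ℝ → ℝ → ℝ} {D : ℝ → ℝ → ℝ} (h : LinLimit C M d D)
    (hC : 0 ≤ C) {s t : ℝ} (hst : s < t) (hs : ∀ x, 0 ≤ D x s) {z : ℝ} (hz : 0 < D z s)
    (x : ℝ) : 0 < D x t := by
  obtain ⟨J₀, hJ₀⟩ := h.1 (s - 1)
  set η := D z s / 5 with hη
  have hηpos : 0 < η := by positivity
  obtain ⟨J₁, hJ₁⟩ := h.2 (Icc (z - 1) (z + 1) ×ˢ {s}) (isCompact_Icc.prod isCompact_singleton)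
    η hηpos
  -- a ball on which all late approximants exceed `η`
  obtain ⟨ρ, hρ, hball⟩ : ∃ ρ > 0, ∀ j ≥ J₁, ∀ y, |y - z| < ρ → η ≤ d j y s := by
    set J := max J₀ J₁
    obtain ⟨dt, dx, dxx, hl⟩ := hJ₀ J (le_max_left _ _)
    have hc : ContinuousAt (fun y => d J y s) z := (hl.hx z s (by linarith)).continuousAt
    obtain ⟨ρ, hρ, hb⟩ := Metric.continuousAt_iff.1 hc η hηpos
    refine ⟨min ρ 1, lt_min hρ one_pos, fun j hj y hy => ?_⟩
    have hy1 := abs_lt.1 (hy.trans_le (min_le_right _ _))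
    have h1 := abs_lt.1 (hJ₁ J (le_max_right _ _) (z, s) ⟨⟨by linarith, by linarith⟩, rfl⟩)
    have h2 := abs_lt.1 (hJ₁ J (le_max_right _ _) (y, s) ⟨⟨by linarith, by linarith⟩, rfl⟩)
    have h3 := abs_lt.1 (hJ₁ j hj (y, s) ⟨⟨by linarith, by linarith⟩, rfl⟩)
    have h4 := hb (show dist y z < ρ from hy.trans_le (min_le_left _ _))
    rw [Real.dist_eq] at h4
    have h5 := abs_lt.1 h4
    simp only at h1 h2 h3
    have : D z s = 5 * η := by rw [hη]; ring
    linarith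
  set L := t - s with hL
  have hLpos : 0 < L := by linarith
  set κ := exp (-C * L) * exp (-(log (L + 1)) / 2 - (x - z) ^ 2 / (4 * L)) with hκ
  have hκpos : 0 < κ := by positivity
  set e := exp (C * L) with he
  have hepos : 0 < e := exp_pos _
  obtain ⟨τ₀, hτ, hτ1, hsmall⟩ := heatK_small hρ (show 0 < κ / (2 * e) by positivity)
  have hKlow : κ ≤ exp (-C * L) * heatK (x - z) (τ₀ + L) := by
    rw [hκ, heatK]
    have l1 : log (τ₀ + L) ≤ log (L + 1) := log_le_log (by linarith) (by linarith)
    have l2 : (x - z) ^ 2 / (4 * (τ₀ + L)) ≤ (x - z) ^ 2 / (4 * L) := by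
      apply div_le_div_of_nonneg_left (sq_nonneg _) (by linarith) (by linarith)
    gcongr
  set A₀ := η / heatK 0 τ₀ with hA
  have hA0 : 0 < A₀ := div_pos hηpos (heatK_pos _ _)
  have hAK : A₀ * heatK 0 τ₀ = η := div_mul_cancel₀ _ (heatK_pos _ _).ne'
  set S := 1 + (x ^ 2 + 2 * L) with hS
  have hSpos : 0 < S := by positivity
  set m := A₀ * κ / 4 with hm
  have hmpos : 0 < m := by positivity
  set β := m / (e * S) with hβ
  have hβpos : 0 < β := by positivity
  have hβe : e * (β * S) = m := by rw [hβ]; field_simp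
  obtain ⟨J₂, hJ₂⟩ := h.lower_bound hs hβpos hβpos
  obtain ⟨J₃, hJ₃⟩ := h.2 {(x, t)} isCompact_singleton m hmpos
  set j := max (max J₀ J₁) (max J₂ J₃) with hj
  obtain ⟨dt, dx, dxx, hl⟩ := hJ₀ j ((le_max_left _ _).trans (le_max_left _ _))
  have i1 := hball j ((le_max_right _ _).trans (le_max_left _ _))
  have i2 := hJ₂ j ((le_max_left _ _).trans (le_max_right _ _))
  have i3 := (abs_lt.1 (hJ₃ j ((le_max_right _ _).trans (le_max_right _ _)) (x, t) rfl)).2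
  have hKρ : 0 ≤ A₀ * heatK ρ τ₀ := mul_nonneg hA0.le (heatK_pos _ _).le
  have key := hl.barrier hC (show s - 1 < s by linarith) hst.le (A₀ := A₀) (z := z) (τ₀ := τ₀)
    (β₀ := A₀ * heatK ρ τ₀ + β) (β₁ := β) hA0.le hτ (by linarith) hβpos.le (fun y => by
      rcases lt_or_ge |y - z| ρ with hy | hy
      · have k1 := i1 y hy
        have k2 : A₀ * heatK (y - z) τ₀ ≤ A₀ * heatK 0 τ₀ :=
          mul_le_mul_of_nonneg_left (heatK_anti hτ (by simp)) hA0.le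
        have k3 : 0 ≤ β * y ^ 2 := by positivity
        linarith
      · have k1 := i2 y
        have k2 : A₀ * heatK (y - z) τ₀ ≤ A₀ * heatK ρ τ₀ :=
          mul_le_mul_of_nonneg_left (heatK_anti hτ (by rwa [abs_of_pos hρ])) hA0.le
        linarith) x
  rw [← hL, ← he] at key
  have k1 : A₀ * κ ≤ exp (-C * L) * (A₀ * heatK (x - z) (τ₀ + L)) := by
    have := mul_le_mul_of_nonneg_left hKlow hA0.le
    linarith
  have k2 : e * (A₀ * heatK ρ τ₀) ≤ A₀ * κ / 2 := by
    have := mul_le_mul_of_nonneg_left hsmall (mul_pos hepos hA0).le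
    have e2 : e * A₀ * (κ / (2 * e)) = A₀ * κ / 2 := by field_simp
    linarith
  have k3 : e * (A₀ * heatK ρ τ₀ + β + β * (x ^ 2 + 2 * L))
      = e * (A₀ * heatK ρ τ₀) + e * (β * S) := by rw [hS]; ring
  rw [k3, hβe] at key
  simp only at i3
  have : A₀ * κ = 4 * m := by rw [hm]; ring
  linarith

/-- If the limit `D` has, at each time, a constant weak sign in `x`, then one zero of `D` forces
`D ≡ 0`. -/
lemma LinLimit.eq_zero {C M : ℝ} {d : ℕ → ℝ → ℝ → ℝ} {D : ℝ → ℝ → ℝ} (h : LinLimit C M d D)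
    (hC : 0 ≤ C) (hsign : ∀ t, (∀ x, 0 ≤ D x t) ∨ (∀ x, D x t ≤ 0)) {x₁ t₁ : ℝ}
    (h1 : D x₁ t₁ = 0) (x t : ℝ) : D x t = 0 := by
  have hpast : ∀ s < t₁, ∀ y, D y s = 0 := by
    intro s hs y
    rcases hsign s with hp | hn
    · by_contra hne
      have := h.pos hC hs hp (lt_of_le_of_ne (hp y) (Ne.symm hne)) x₁
      linarith
    · by_contra hne
      have := h.neg.pos hC hs (fun x => neg_nonneg.2 (hn x))
        (neg_pos.2 (lt_of_le_of_ne (hn y) hne)) x₁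
      linarith
  rcases lt_or_ge t t₁ with ht | ht
  · exact hpast t ht x
  · have h0 := hpast (t₁ - 1) (by linarith)
    apply le_antisymm
    · have := h.neg.nonneg hC (show t₁ - 1 ≤ t by linarith) (fun x => by simp [h0 x]) x
      linarith
    · exact h.nonneg hC (show t₁ - 1 ≤ t by linarith) (fun x => (h0 x).ge) x

/-! ### Preservation of a single sign change -/

set_option maxHeartbeats 2000000 in
/-- **One sign change is preserved.** If, as `t → 0⁺`, the negative part of `v` vanishes on the left
of `0` and its positive part on the right, then `v(·,t)` never takes a negative value to the left
of a positive one. The product `-v(x,t) v(y,t)` is, where `v(x,t) < 0 < v(y,t)`, a subsolution in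
the two space variables `(x,y)`; it vanishes on the diagonal, so the maximum principle
on `{x < y}` applies. The possible discontinuity at `x = y = 0`, `t = 0` is absorbed by a
concentrated heat kernel. -/
lemma LinSol.single_sign_change {C M : ℝ} {v vt vx vxx : ℝ → ℝ → ℝ} (h : LinSol C M 0 v vt vx vxx)
    (hC : 0 ≤ C)
    (hinit : ∀ δ > 0, ∀ R : ℝ, ∀ ε > 0, ∃ σ > 0, ∀ s ∈ Ioo (0 : ℝ) σ,
      (∀ x ∈ Icc (-R) (-δ), -ε ≤ v x s) ∧ (∀ x ∈ Icc δ R, v x s ≤ ε))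
    {t₀ x₀ y₀ : ℝ} (ht₀ : 0 < t₀) (hxy : x₀ < y₀) (hneg : v x₀ t₀ < 0) : v y₀ t₀ ≤ 0 := by
  by_contra hpos
  push Not at hpos
  set E : ℝ → ℝ := fun t => exp (-(2 * C) * t) with hE
  have hEpos : ∀ t, 0 < E t := fun t => exp_pos _
  have hEle : ∀ t, 0 ≤ t → E t ≤ 1 := by
    intro t h
    apply exp_le_one_iff.2
    nlinarith
  have hEd : ∀ t, HasDerivAt E (E t * (-(2 * C))) t := by
    intro t
    have := (((hasDerivAt_id t).const_mul (-(2 * C)))).exp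
    simpa [hE] using this
  set p := -(E t₀ * (v x₀ t₀ * v y₀ t₀)) with hp
  have hppos : 0 < p := by
    have := mul_pos (hEpos t₀) (mul_pos (neg_pos.2 hneg) hpos)
    linarith
  have hM : 0 < M := by
    have h1 := h.bdd y₀ t₀ ht₀
    rw [abs_of_pos hpos] at h1
    linarith
  set S := 1 + x₀ ^ 2 + y₀ ^ 2 + 5 * t₀ with hS
  have hSpos : 0 < S := by positivity
  set ε := p / (3 * S) with hε
  have hεpos : 0 < ε := by positivity
  have hεS : ε * S = p / 3 := by rw [hε]; field_simp
  set k₁ := exp (-(log (t₀ / 2)) / 2) with hk₁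
  have hk₁pos : 0 < k₁ := exp_pos _
  -- `δ` is the width of the kernel, normalised so that it is at least `M²` on `|x| ≤ δ` initially
  set δ := 2 * p / (3 * M ^ 2 * exp 1 * k₁) with hδ
  have hδpos : 0 < δ := by positivity
  set τ₀ := (δ / 2) ^ 2 with hτ₀
  have hτpos : 0 < τ₀ := by positivity
  set A₀ := M ^ 2 * (exp 1 * (δ / 2)) with hA₀
  have hA₀pos : 0 < A₀ := by positivity
  have hA₀k : A₀ * k₁ = p / 3 := by rw [hA₀, hδ]; field_simp
  have hAδ : A₀ * heatK δ τ₀ = M ^ 2 := by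
    rw [heatK, hτ₀, log_pow]
    have e1 : -(((2 : ℕ) : ℝ) * log (δ / 2)) / 2 - δ ^ 2 / (4 * (δ / 2) ^ 2)
        = -log (δ / 2) + -1 := by
      push_cast; field_simp; ring
    rw [e1, exp_add, exp_neg, exp_log (by positivity), exp_neg, hA₀]
    field_simp
  set R := |x₀| + |y₀| + M ^ 2 / ε + 1 with hR
  have hMε : 0 < M ^ 2 / ε := by positivity
  have hx0R : |x₀| < R := by have := abs_nonneg y₀; linarith
  have hy0R : |y₀| < R := by have := abs_nonneg x₀; linarith
  have hRM : M ^ 2 ≤ ε * R ^ 2 := by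
    have h1 : M ^ 2 / ε ≤ R := by
      have := abs_nonneg x₀; have := abs_nonneg y₀; linarith
    have h2 : M ^ 2 ≤ ε * R := by rwa [div_le_iff₀' hεpos] at h1
    have h3 : 1 ≤ R := by have := abs_nonneg x₀; have := abs_nonneg y₀; linarith
    nlinarith
  obtain ⟨σ, hσ, hinit'⟩ := hinit δ hδpos R (ε / M) (by positivity)
  set s := min σ t₀ / 2 with hs
  have hspos : 0 < s := by positivity
  have hsσ : s < σ := by have := min_le_left σ t₀; linarith
  have hst : s ≤ t₀ / 2 := by have := min_le_right σ t₀; linarith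
  obtain ⟨hleft, hright⟩ := hinit' s ⟨hspos, hsσ⟩
  set B : ℝ → ℝ → ℝ → ℝ := fun x y t =>
    ε * (1 + x ^ 2 + y ^ 2 + 5 * t) + A₀ * heatK x (τ₀ + (t - s)) with hB
  have hBge : ∀ x y t, s ≤ t → ε * (1 + x ^ 2 + y ^ 2) ≤ B x y t := by
    intro x y t h1
    have h2 : 0 ≤ A₀ * heatK x (τ₀ + (t - s)) := mul_nonneg hA₀pos.le (heatK_pos _ _).le
    have h3 : 0 ≤ ε * (5 * t) := mul_nonneg hεpos.le (by linarith)
    simp only [hB]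
    linarith
  set G : (ℝ × ℝ) × ℝ → ℝ := fun q => B q.1.1 q.1.2 q.2
    - E q.2 * (max (-v q.1.1 q.2) 0 * max (v q.1.2 q.2) 0) with hG
  set F : ℝ → ℝ → ℝ → ℝ := fun x y t => B x y t + E t * (v x t * v y t) with hF
  have hGF : ∀ x y t, v x t ≤ 0 → 0 ≤ v y t → G ((x, y), t) = F x y t := by
    intro x y t h1 h2
    simp only [hG, hF]
    rw [max_eq_left (by linarith), max_eq_left h2]
    ring
  set box : Set ((ℝ × ℝ) × ℝ) := (Icc (-R) R ×ˢ Icc (-R) R) ×ˢ Icc s t₀ with hbox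
  set Kc : Set ((ℝ × ℝ) × ℝ) := box ∩ {q | q.1.1 ≤ q.1.2} with hKc
  have hcomp : IsCompact Kc :=
    ((isCompact_Icc.prod isCompact_Icc).prod isCompact_Icc).inter_right
      (isClosed_le (continuous_fst.comp continuous_fst) (continuous_snd.comp continuous_fst))
  have hGc : ContinuousOn G Kc := by
    have c1 : ContinuousOn (fun q : (ℝ × ℝ) × ℝ => v q.1.1 q.2) Kc := by
      have g : Continuous (fun q : (ℝ × ℝ) × ℝ => (q.1.1, q.2)) := by fun_prop
      exact h.cont.comp g.continuousOn
        (fun q hq => ⟨trivial, lt_of_lt_of_le hspos hq.1.2.1⟩)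
    have c2 : ContinuousOn (fun q : (ℝ × ℝ) × ℝ => v q.1.2 q.2) Kc := by
      have g : Continuous (fun q : (ℝ × ℝ) × ℝ => (q.1.2, q.2)) := by fun_prop
      exact h.cont.comp g.continuousOn
        (fun q hq => ⟨trivial, lt_of_lt_of_le hspos hq.1.2.1⟩)
    have c3 : ContinuousOn (fun q : (ℝ × ℝ) × ℝ => heatK q.1.1 (τ₀ + (q.2 - s))) Kc := by
      refine heatK_cont (by fun_prop) (by fun_prop) (fun q hq => ?_)
      have h1 : s ≤ q.2 := hq.1.2.1
      linarith
    have c4 : ContinuousOn (fun q : (ℝ × ℝ) × ℝ => E q.2) Kc := by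
      simp only [hE]; fun_prop
    have c5 : ContinuousOn (fun q : (ℝ × ℝ) × ℝ =>
        ε * (1 + q.1.1 ^ 2 + q.1.2 ^ 2 + 5 * q.2)) Kc := by fun_prop
    exact (c5.add (continuousOn_const.mul c3)).sub
      (c4.mul ((ContinuousOn.sup c1.neg continuousOn_const).mul
        (ContinuousOn.sup c2 continuousOn_const)))
  have hmem0 : ((x₀, y₀), t₀) ∈ Kc :=
    ⟨⟨⟨abs_le.1 hx0R.le, abs_le.1 hy0R.le⟩, ⟨by linarith, le_rfl⟩⟩, hxy.le⟩
  have hG0 : G ((x₀, y₀), t₀) < 0 := by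
    rw [hGF _ _ _ hneg.le hpos.le]
    have k : heatK x₀ (τ₀ + (t₀ - s)) ≤ k₁ := by
      apply exp_le_exp.2
      have l1 : log (t₀ / 2) ≤ log (τ₀ + (t₀ - s)) :=
        log_le_log (by linarith) (by linarith)
      have l2 : 0 ≤ x₀ ^ 2 / (4 * (τ₀ + (t₀ - s))) := by
        apply div_nonneg (sq_nonneg _); linarith
      linarith
    have k' := mul_le_mul_of_nonneg_left k hA₀pos.le
    simp only [hF, hB]
    rw [← hS]
    linarith
  obtain ⟨⟨⟨x, y⟩, t⟩, ⟨⟨⟨hxI, hyI⟩, htI⟩, hle⟩, hmin⟩ := hcomp.exists_isMinOn ⟨_, hmem0⟩ hGc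
  simp only [mem_ofPred_eq] at hxI hyI htI hle
  have htpos : 0 < t := lt_of_lt_of_le hspos htI.1
  have hGneg : G ((x, y), t) < 0 := lt_of_le_of_lt (hmin hmem0) hG0
  have hbx := abs_le.1 (h.bdd x t htpos)
  have hby := abs_le.1 (h.bdd y t htpos)
  have hBpos : 0 < B x y t := by
    have := hBge x y t htI.1
    have : 0 < ε * (1 + x ^ 2 + y ^ 2) := by positivity
    linarith
  have hvx : v x t < 0 := by
    by_contra hc
    push Not at hc
    simp only [hG] at hGneg
    rw [max_eq_right (show -v x t ≤ 0 by linarith)] at hGneg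
    simp at hGneg
    linarith
  have hvy : 0 < v y t := by
    by_contra hc
    push Not at hc
    simp only [hG] at hGneg
    rw [max_eq_right hc] at hGneg
    simp at hGneg
    linarith
  have hFneg : F x y t < 0 := by rw [← hGF x y t hvx.le hvy.le]; exact hGneg
  have hlt : x < y := by
    rcases eq_or_lt_of_le hle with e | e
    · rw [e] at hvx; linarith
    · exact e
  have hprod : -(v x t) * v y t ≤ M ^ 2 := by
    have : -(v x t) * v y t ≤ M * M := mul_le_mul (by linarith) hby.2 hvy.le hM.le
    linarith
  have hEprod : -(E t * (v x t * v y t)) ≤ -(v x t) * v y t := by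
    have h1 := hEle t htpos.le
    have h2 : 0 ≤ -(v x t) * v y t := mul_nonneg (by linarith) hvy.le
    have h3 := mul_le_of_le_one_left h2 h1
    linarith
  have hts : s < t := by
    rcases eq_or_lt_of_le htI.1 with e | e
    · exfalso
      rw [← e] at hFneg hEprod hprod hvx hvy hbx hby
      have hBs := hBge x y s le_rfl
      simp only [hF] at hFneg
      have hεle : ε ≤ ε * (1 + x ^ 2 + y ^ 2) :=
        le_mul_of_one_le_right hεpos.le (by linarith [sq_nonneg x, sq_nonneg y])
      rcases le_or_gt x (-δ) with hxδ | hxδ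
      · have h1 := hleft x ⟨hxI.1, hxδ⟩
        have h2 : -(v x s) * v y s ≤ ε / M * M :=
          mul_le_mul (by linarith) hby.2 hvy.le (by positivity)
        rw [div_mul_cancel₀ _ hM.ne'] at h2
        linarith
      · rcases le_or_gt δ y with hyδ | hyδ
        · have h1 := hright y ⟨hyδ, hyI.2⟩
          have h2 : -(v x s) * v y s ≤ M * (ε / M) :=
            mul_le_mul (by linarith) h1 hvy.le hM.le
          rw [mul_div_cancel₀ _ hM.ne'] at h2
          linarith
        · have h1 : heatK δ τ₀ ≤ heatK x τ₀ := by
            apply heatK_anti hτpos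
            rw [abs_of_pos hδpos]
            exact abs_le.2 ⟨hxδ.le, by linarith⟩
          have h2 := mul_le_mul_of_nonneg_left h1 hA₀pos.le
          have h3 : 0 < ε * (1 + x ^ 2 + y ^ 2 + 5 * s) := by positivity
          simp only [hB, sub_self, add_zero] at hFneg
          linarith
    · exact e
  have hint : ∀ z, (z = x ∨ z = y) → -R < z ∧ z < R := by
    intro z hz
    apply abs_lt.1
    apply abs_lt_of_sq_lt_sq _ (by have := abs_nonneg x₀; linarith)
    by_contra hc
    push Not at hc
    have h1 : M ^ 2 ≤ ε * z ^ 2 := hRM.trans (by gcongr)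
    have h2 : ε * z ^ 2 ≤ ε * (x ^ 2 + y ^ 2) := by
      apply mul_le_mul_of_nonneg_left _ hεpos.le
      rcases hz with e | e <;> rw [e]
      · linarith [sq_nonneg y]
      · linarith [sq_nonneg x]
    have h3 := hBge x y t htI.1
    simp only [hF] at hFneg
    linarith
  have hminF : ∀ x' y' t', x' ∈ Icc (-R) R → y' ∈ Icc (-R) R → t' ∈ Icc s t₀ → x' ≤ y' →
      v x' t' ≤ 0 → 0 ≤ v y' t' → F x y t ≤ F x' y' t' := by
    intro x' y' t' h1 h2 h3 h4 h5 h6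
    rw [← hGF x y t hvx.le hvy.le, ← hGF x' y' t' h5 h6]
    exact hmin (show ((x', y'), t') ∈ Kc from ⟨⟨⟨h1, h2⟩, h3⟩, h4⟩)
  have hp' : 0 < τ₀ + (t - s) := by linarith
  set K2 := (x ^ 2 / (4 * (τ₀ + (t - s)) ^ 2) - 1 / (2 * (τ₀ + (t - s))))
    * heatK x (τ₀ + (t - s)) with hK2
  have dT : HasDerivAt (fun τ => F x y τ) (5 * ε + A₀ * K2
      + E t * (vt x t * v y t + v x t * vt y t - 2 * C * (v x t * v y t))) t := by
    have hk : HasDerivAt (fun τ => heatK x (τ₀ + (τ - s))) K2 t := by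
      have := (heatK_t x hp').comp t (((hasDerivAt_id t).sub_const s).const_add τ₀)
      simpa [hK2, Function.comp_def] using this
    have h1 := (((((hasDerivAt_id t).const_mul 5).const_add (1 + x ^ 2 + y ^ 2)).const_mul ε).add
      (hk.const_mul A₀)).add ((hEd t).mul ((h.ht x t htpos).mul (h.ht y t htpos)))
    refine h1.congr_deriv ?_
    simp only [Pi.mul_apply]
    ring
  have eT := left_deriv_nonpos dT (by
    have n1 : ∀ᶠ τ in 𝓝[<] t, v x τ < 0 :=
      nhdsWithin_le_nhds ((h.ht x t htpos).continuousAt.eventually_lt_const hvx)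
    have n2 : ∀ᶠ τ in 𝓝[<] t, 0 < v y τ :=
      nhdsWithin_le_nhds ((h.ht y t htpos).continuousAt.eventually_const_lt hvy)
    filter_upwards [n1, n2, Ioo_mem_nhdsLT hts] with τ h1 h2 h3
    exact hminF x y τ hxI hyI ⟨h3.1.le, h3.2.le.trans htI.2⟩ hle h1.le h2.le)
  have dX : ∀ z, HasDerivAt (fun z => F z y t) (ε * (2 * z) + A₀ * (-z / (2 * (τ₀ + (t - s)))
      * heatK z (τ₀ + (t - s))) + E t * (vx z t * v y t)) z := by
    intro z
    have h1 := (((((((hasDerivAt_pow 2 z).const_add 1).add_const (y ^ 2)).add_const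
      (5 * t)).const_mul ε).add ((heatK_x z hp').const_mul A₀))).add
      (((h.hx z t htpos).mul_const (v y t)).const_mul (E t))
    refine h1.congr_deriv ?_
    simp
  have dXX : HasDerivAt (fun z => ε * (2 * z) + A₀ * (-z / (2 * (τ₀ + (t - s)))
      * heatK z (τ₀ + (t - s))) + E t * (vx z t * v y t))
      (2 * ε + A₀ * K2 + E t * (vxx x t * v y t)) x := by
    have h1 := ((((hasDerivAt_id x).const_mul 2).const_mul ε).add
      ((heatK_xx x hp').const_mul A₀)).add
      (((h.hxx x t htpos).mul_const (v y t)).const_mul (E t))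
    refine h1.congr_deriv ?_
    simp only [hK2]
    ring
  have eX := second_deriv_nonneg dX dXX (by
    have n1 : ∀ᶠ z in 𝓝 x, v z t < 0 :=
      (h.hx x t htpos).continuousAt.eventually_lt_const hvx
    have hx' := hint x (Or.inl rfl)
    filter_upwards [n1, Ioo_mem_nhds hx'.1 hx'.2, Iio_mem_nhds hlt] with z h1 h2 h3
    exact hminF z y t ⟨h2.1.le, h2.2.le⟩ hyI htI (le_of_lt h3) h1.le hvy.le)
  have dY : ∀ z, HasDerivAt (fun z => F x z t) (ε * (2 * z) + E t * (v x t * vx z t)) z := by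
    intro z
    have h1 := ((((((hasDerivAt_pow 2 z).const_add (1 + x ^ 2)).add_const
      (5 * t)).const_mul ε).add_const (A₀ * heatK x (τ₀ + (t - s))))).add
      (((h.hx z t htpos).const_mul (v x t)).const_mul (E t))
    refine h1.congr_deriv ?_
    simp
  have dYY : HasDerivAt (fun z => ε * (2 * z) + E t * (v x t * vx z t))
      (2 * ε + E t * (v x t * vxx y t)) y := by
    have h1 := ((((hasDerivAt_id y).const_mul 2).const_mul ε)).add
      (((h.hxx y t htpos).const_mul (v x t)).const_mul (E t))
    refine h1.congr_deriv ?_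
    ring
  have eY := second_deriv_nonneg dY dYY (by
    have n1 : ∀ᶠ z in 𝓝 y, 0 < v z t :=
      (h.hx y t htpos).continuousAt.eventually_const_lt hvy
    have hy' := hint y (Or.inr rfl)
    filter_upwards [n1, Ioo_mem_nhds hy'.1 hy'.2, Ioi_mem_nhds hlt] with z h1 h2 h3
    exact hminF x z t hxI ⟨h2.1.le, h2.2.le⟩ htI (le_of_lt h3) hvx.le h1.le)
  have r1 : C * v x t ≤ vt x t - vxx x t := by
    have h1 := (abs_le.1 (h.eq x t htpos)).1
    rw [abs_of_neg hvx] at h1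
    linarith
  have r2 : vt y t - vxx y t ≤ C * v y t := by
    have h1 := (abs_le.1 (h.eq y t htpos)).2
    rwa [abs_of_pos hvy] at h1
  have r3 : 0 ≤ (vt x t - vxx x t - C * v x t) * v y t :=
    mul_nonneg (by linarith) hvy.le
  have r4 : 0 ≤ (-(v x t)) * (C * v y t - (vt y t - vxx y t)) :=
    mul_nonneg (by linarith) (by linarith)
  have r5 := mul_nonneg (hEpos t).le (add_nonneg r3 r4)
  linarith

/-! ### Solutions of (E) -/

lemma exists_lip {f : ℝ → ℝ → ℝ} {T : ℝ} (M : ℝ) (hT : 0 < T)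
    (hf : ContDiff ℝ 2 (Function.uncurry f)) (hfper : ∀ t u : ℝ, f (t + T) u = f t u) :
    ∃ C, 0 ≤ C ∧ ∀ t, ∀ a ∈ Icc 0 M, ∀ b ∈ Icc 0 M, |f t a - f t b| ≤ C * |a - b| := by
  obtain ⟨C, hC⟩ := (hf.contDiffOn (s := Icc 0 T ×ˢ Icc 0 M)).exists_lipschitzOnWith
    (by norm_num) ((convex_Icc 0 T).prod (convex_Icc 0 M)) (isCompact_Icc.prod isCompact_Icc)
  refine ⟨C, C.2, fun t a ha b hb => ?_⟩
  have hper : Function.Periodic f T := fun t => funext (hfper t)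
  obtain ⟨τ, hτ, he⟩ := hper.exists_mem_Ico₀ hT t
  rw [he]
  have := hC.dist_le_mul (τ, a) ⟨⟨hτ.1, hτ.2.le⟩, ha⟩ (τ, b) ⟨⟨hτ.1, hτ.2.le⟩, hb⟩
  simpa [Prod.dist_eq, Real.dist_eq] using this

lemma IsSolOn.continuousOn {f u : ℝ → ℝ → ℝ} {a : ℝ} (h : IsSolOn f u (Ioi a)) :
    ContinuousOn (fun p : ℝ × ℝ => u p.1 p.2) (univ ×ˢ Ioi a) := by
  obtain ⟨ut, ux, uxx, ht, hx, -, -, hcx, -, -⟩ := h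
  rintro ⟨x, t⟩ ⟨-, hta⟩
  have hta' : a < t := hta
  set r := (t - a) / 2 with hr
  have hsub : Icc (t - r) (t + r) ⊆ Ioi a := by
    intro τ hτ
    have := hτ.1
    show a < τ
    linarith
  obtain ⟨K, hK⟩ := (isCompact_Icc.prod isCompact_Icc).exists_bound_of_continuousOn
    (hcx.mono (prod_mono (subset_univ (Icc (x - 1) (x + 1))) hsub))
  have hc := continuousOn_prod_of_continuousOn_lipschitzOnWith
    (fun p : ℝ × ℝ => u p.1 p.2) (s := Icc (x - 1) (x + 1)) (t := Icc (t - r) (t + r)) K.toNNReal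
    (fun y _ τ hτ => (ht y τ (hsub hτ)).continuousAt.continuousWithinAt)
    (fun τ hτ => (convex_Icc _ _).lipschitzOnWith_of_nnnorm_hasDerivWithin_le
      (fun y hy => (hx y τ (hsub hτ)).hasDerivWithinAt)
      (fun y hy => by
        rw [← NNReal.coe_le_coe]
        exact (hK (y, τ) ⟨hy, hτ⟩).trans (le_coe_toNNReal K)))
  have hn : Icc (x - 1) (x + 1) ×ˢ Icc (t - r) (t + r) ∈ 𝓝 (x, t) :=
    prod_mem_nhds (Icc_mem_nhds (by linarith) (by linarith))
      (Icc_mem_nhds (by linarith) (by linarith))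
  exact (hc.continuousAt hn).continuousWithinAt

lemma IsSolOn.mono {f u : ℝ → ℝ → ℝ} {I J : Set ℝ} (h : IsSolOn f u I) (hJ : J ⊆ I) :
    IsSolOn f u J := by
  obtain ⟨ut, ux, uxx, h1, h2, h3, h4, h5, h6, h7⟩ := h
  exact ⟨ut, ux, uxx, fun x t ht => h1 x t (hJ ht), fun x t ht => h2 x t (hJ ht),
    fun x t ht => h3 x t (hJ ht), h4.mono (prod_mono le_rfl hJ), h5.mono (prod_mono le_rfl hJ),
    h6.mono (prod_mono le_rfl hJ), fun x t ht => h7 x t (hJ ht)⟩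

/-- Equation (E) is invariant under `x ↦ σ x + b` with `σ = ±1` and under time shifts that are
periods of `f`. -/
lemma IsSolOn.affine {f u : ℝ → ℝ → ℝ} {a σ b τ : ℝ} (h : IsSolOn f u (Ioi a))
    (hσ : σ * σ = 1) (hτ : ∀ t v, f (t + τ) v = f t v) :
    IsSolOn f (fun x t => u (σ * x + b) (t + τ)) (Ioi (a - τ)) := by
  obtain ⟨ut, ux, uxx, h1, h2, h3, h4, h5, h6, h7⟩ := h
  have hm : ∀ t ∈ Ioi (a - τ), t + τ ∈ Ioi a := by
    intro t ht
    have : a - τ < t := ht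
    show a < t + τ
    linarith
  have hlin : ∀ x : ℝ, HasDerivAt (fun y => σ * y + b) σ x := fun x => by
    simpa using ((hasDerivAt_id x).const_mul σ).add_const b
  have hg : Continuous (fun p : ℝ × ℝ => (σ * p.1 + b, p.2 + τ)) := by fun_prop
  have hmaps : MapsTo (fun p : ℝ × ℝ => (σ * p.1 + b, p.2 + τ)) (univ ×ˢ Ioi (a - τ))
      (univ ×ˢ Ioi a) := fun p hp => ⟨trivial, hm p.2 hp.2⟩
  refine ⟨fun x t => ut (σ * x + b) (t + τ), fun x t => ux (σ * x + b) (t + τ) * σ,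
    fun x t => uxx (σ * x + b) (t + τ), fun x t ht => ?_, fun x t ht => ?_, fun x t ht => ?_,
    h4.comp hg.continuousOn hmaps, (h5.comp hg.continuousOn hmaps).mul continuousOn_const,
    h6.comp hg.continuousOn hmaps, fun x t ht => ?_⟩
  · exact (h1 (σ * x + b) (t + τ) (hm t ht)).comp_add_const t τ
  · exact (h2 (σ * x + b) (t + τ) (hm t ht)).comp x (hlin x)
  · refine (((h3 (σ * x + b) (t + τ) (hm t ht)).comp x (hlin x)).mul_const σ).congr_deriv ?_
    rw [mul_assoc, hσ, mul_one]
  · beta_reduce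
    rw [h7 _ _ (hm t ht), hτ]

lemma IsSolOn.of_ode {f : ℝ → ℝ → ℝ} {ψ : ℝ → ℝ} (hf : Continuous (Function.uncurry f))
    (h : ∀ t, HasDerivAt ψ (f t (ψ t)) t) (I : Set ℝ) : IsSolOn f (fun _ t => ψ t) I := by
  have hψ : Continuous ψ := continuous_iff_continuousAt.2 fun t => (h t).continuousAt
  refine ⟨fun _ t => f t (ψ t), fun _ _ => 0, fun _ _ => 0, fun x t _ => h t,
    fun x t _ => hasDerivAt_const _ _, fun x t _ => hasDerivAt_const _ _, ?_,
    continuousOn_const, continuousOn_const, fun x t _ => by simp⟩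
  exact (hf.comp (continuous_snd.prodMk (hψ.comp continuous_snd))).continuousOn

/-- The difference of two solutions with values in `[0, M]` solves a linear equation. -/
lemma IsSolOn.linSol_sub {f u w : ℝ → ℝ → ℝ} {C M a : ℝ} (hu : IsSolOn f u (Ioi a))
    (hw : IsSolOn f w (Ioi a))
    (hC : ∀ t, ∀ a ∈ Icc 0 M, ∀ b ∈ Icc 0 M, |f t a - f t b| ≤ C * |a - b|)
    (hu' : ∀ x t, a < t → u x t ∈ Icc 0 M) (hw' : ∀ x t, a < t → w x t ∈ Icc 0 M) :
    ∃ dt dx dxx, LinSol C M a (fun x t => u x t - w x t) dt dx dxx := by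
  have hcu := hu.continuousOn
  have hcw := hw.continuousOn
  obtain ⟨ut, ux, uxx, h1, h2, h3, -, -, -, h7⟩ := hu
  obtain ⟨wt, wx, wxx, k1, k2, k3, -, -, -, k7⟩ := hw
  refine ⟨fun x t => ut x t - wt x t, fun x t => ux x t - wx x t, fun x t => uxx x t - wxx x t,
    fun x t ht => (h1 x t ht).sub (k1 x t ht), fun x t ht => (h2 x t ht).sub (k2 x t ht),
    fun x t ht => (h3 x t ht).sub (k3 x t ht), hcu.sub hcw, fun x t ht => ?_, fun x t ht => ?_⟩
  · have p := hu' x t ht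
    have q := hw' x t ht
    exact abs_le.2 ⟨by linarith [p.1, q.2], by linarith [p.2, q.1]⟩
  · have e : ut x t - wt x t - (uxx x t - wxx x t) = f t (u x t) - f t (w x t) := by
      rw [h7 x t ht, k7 x t ht]; ring
    simp only [e]
    exact hC t _ (hu' x t ht) _ (hw' x t ht)

/-- The solution with Heaviside datum crosses any other solution between `0` and `ω(α,·)` at most
once, from above to below. -/
lemma IsHeavisideSol.crossing {f : ℝ → ℝ → ℝ} {α C M : ℝ} {ωα : ℝ → ℝ} {u₀ W : ℝ → ℝ → ℝ}
    (hu₀ : IsHeavisideSol f α 0 ωα u₀) (hW : IsSolOn f W (Ioi 0))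
    (hWb : ∀ x t, 0 < t → 0 ≤ W x t ∧ W x t ≤ ωα t) (hα : ωα 0 = α) (hωc : Continuous ωα)
    (hM : ∀ t, ωα t ≤ M) (hC0 : 0 ≤ C)
    (hC : ∀ t, ∀ a ∈ Icc 0 M, ∀ b ∈ Icc 0 M, |f t a - f t b| ≤ C * |a - b|)
    {t x y : ℝ} (ht : 0 < t) (hxy : x < y) (hlt : u₀ x t < W x t) : u₀ y t ≤ W y t := by
  obtain ⟨hu, hub, hui⟩ := hu₀
  obtain ⟨dt, dx, dxx, hl⟩ := hu.linSol_sub hW hC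
    (fun x t ht => ⟨(hub x t ht).1, (hub x t ht).2.trans (hM t)⟩)
    (fun x t ht => ⟨(hWb x t ht).1, (hWb x t ht).2.trans (hM t)⟩)
  have := hl.single_sign_change hC0 (fun δ hδ R ε hε => ?_) ht hxy (by linarith)
  · linarith
  · obtain ⟨σ₁, hσ₁, hK⟩ := hui (Icc (-R) (-δ) ∪ Icc δ R) (isCompact_Icc.union isCompact_Icc)
      (by
        rintro (h | h)
        · linarith [h.2]
        · linarith [h.1]) (ε / 2) (by linarith)
    obtain ⟨σ₂, hσ₂, hc⟩ := Metric.continuousAt_iff.1 (hωc.continuousAt (x := 0)) (ε / 2)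
      (by linarith)
    refine ⟨min σ₁ σ₂, lt_min hσ₁ hσ₂, fun s hs => ⟨fun z hz => ?_, fun z hz => ?_⟩⟩
    · have h1 := hK s ⟨hs.1, hs.2.trans_le (min_le_left _ _)⟩ z (Or.inl hz)
      rw [if_pos (by linarith [hz.2]), mul_one] at h1
      have h2 := hc (show dist s 0 < σ₂ by
        rw [Real.dist_eq, sub_zero, abs_of_pos hs.1]
        exact hs.2.trans_le (min_le_right _ _))
      rw [Real.dist_eq, hα] at h2
      have h3 := (hWb z s hs.1).2
      linarith [(abs_lt.1 h1).1, (abs_lt.1 h2).2]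
    · have h1 := hK s ⟨hs.1, hs.2.trans_le (min_le_left _ _)⟩ z (Or.inr hz)
      rw [if_neg (by linarith [hz.1]), mul_zero] at h1
      have h3 := (hWb z s hs.1).1
      linarith [(abs_lt.1 h1).2]

/-! ### Limits of solutions of (E) -/

/-- `V` is the locally uniform limit of solutions `v j` of (E) on `ℝ × (-jT, ∞)` lying between `0`
and `ωα`. Entire solutions (constant sequences) and limits of time shifts of `u₀` are of this
kind; working with the approximants makes parabolic regularity of `V` unnecessary. -/
def ApproxSol (f : ℝ → ℝ → ℝ) (T : ℝ) (ωα : ℝ → ℝ) (v : ℕ → ℝ → ℝ → ℝ) (V : ℝ → ℝ → ℝ) : Prop :=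
  (∀ j : ℕ, IsSolOn f (v j) (Ioi (-((j : ℝ) * T)))) ∧
  (∀ (j : ℕ) (x t : ℝ), -((j : ℝ) * T) < t → 0 ≤ v j x t ∧ v j x t ≤ ωα t) ∧
  ∀ K : Set (ℝ × ℝ), IsCompact K → ∀ ε > 0, ∃ J : ℕ, ∀ j ≥ J, ∀ p ∈ K,
    |v j p.1 p.2 - V p.1 p.2| < ε

lemma ApproxSol.reflect {f : ℝ → ℝ → ℝ} {T : ℝ} {ωα : ℝ → ℝ} {v : ℕ → ℝ → ℝ → ℝ}
    {V : ℝ → ℝ → ℝ} (h : ApproxSol f T ωα v V) :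
    ApproxSol f T ωα (fun j x t => v j (-x) t) (fun x t => V (-x) t) := by
  refine ⟨fun j => ?_, fun j x t ht => h.2.1 j (-x) t ht, fun K hK ε hε => ?_⟩
  · simpa using (h.1 j).affine (σ := -1) (b := 0) (τ := 0) (by norm_num) (by simp)
  · obtain ⟨J, hJ⟩ := h.2.2 (Set.image (fun p : ℝ × ℝ => (-p.1, p.2)) K)
      (hK.image (by fun_prop)) ε hε
    exact ⟨J, fun j hj p hp => hJ j hj (-p.1, p.2) ⟨p, hp, rfl⟩⟩

/-- The limit at `x = +∞` of a limit of `u₀` inherits from `u₀` the property of being crossed at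
most once, from below to above, by any `V` as in `ApproxSol`. -/
lemma ApproxSol.ge_right {f : ℝ → ℝ → ℝ} {T α C M : ℝ} {ωα ψ : ℝ → ℝ} {u₀ U V : ℝ → ℝ → ℝ}
    {v : ℕ → ℝ → ℝ → ℝ} {ℓ : ℕ → ℝ} (h : ApproxSol f T ωα v V) (hT : 0 < T)
    (hfper : ∀ t u : ℝ, f (t + T) u = f t u) (hωper : ∀ t, ωα (t + T) = ωα t)
    (hu₀ : IsHeavisideSol f α 0 ωα u₀) (hα : ωα 0 = α) (hωc : Continuous ωα)
    (hM : ∀ t, ωα t ≤ M) (hC0 : 0 ≤ C)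
    (hC : ∀ t, ∀ a ∈ Icc 0 M, ∀ b ∈ Icc 0 M, |f t a - f t b| ≤ C * |a - b|)
    (hU : IsULimit u₀ ℓ T U) (hψ : LimitAtPlusInf U ψ) {t x y : ℝ} (hxy : x < y)
    (hx : ψ t < V x t) : ψ t ≤ V y t := by
  by_contra hy
  push Not at hy
  set ε := min (V x t - ψ t) (ψ t - V y t) / 3 with hε
  have hεpos : 0 < ε := by
    have := lt_min (sub_pos.2 hx) (sub_pos.2 hy)
    linarith
  have hε1 : 3 * ε ≤ V x t - ψ t := by
    have := min_le_left (V x t - ψ t) (ψ t - V y t); linarith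
  have hε2 : 3 * ε ≤ ψ t - V y t := by
    have := min_le_right (V x t - ψ t) (ψ t - V y t); linarith
  obtain ⟨N, hN⟩ := hψ {t} isCompact_singleton ε hεpos
  set n := max (N - x) (N - y) with hn
  have n1 := abs_lt.1 (hN (x + n) (by have := le_max_left (N - x) (N - y); linarith) t rfl)
  have n2 := abs_lt.1 (hN (y + n) (by have := le_max_right (N - x) (N - y); linarith) t rfl)
  obtain ⟨J₁, hJ₁⟩ := hU {(x + n, t), (y + n, t)} (by simp) ε hεpos
  obtain ⟨m, hm⟩ := exists_nat_gt (-t / T)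
  set i := max J₁ m with hi
  have hit : 0 < t + i * T := by
    have h1 : -t < m * T := (div_lt_iff₀ hT).1 hm
    have h2 : (m : ℝ) ≤ i := by exact_mod_cast le_max_right J₁ m
    nlinarith
  have i1 := abs_lt.1 (hJ₁ i (le_max_left _ _) (x + n, t) (by simp))
  have i2 := abs_lt.1 (hJ₁ i (le_max_left _ _) (y + n, t) (by simp))
  obtain ⟨J₂, hJ₂⟩ := h.2.2 {(x, t), (y, t)} (by simp) ε hεpos
  set j := max i J₂ with hj
  have j1 := abs_lt.1 (hJ₂ j (le_max_right _ _) (x, t) (by simp))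
  have j2 := abs_lt.1 (hJ₂ j (le_max_right _ _) (y, t) (by simp))
  have hij : (i : ℝ) * T ≤ j * T := by
    have : (i : ℝ) ≤ j := by exact_mod_cast le_max_left i J₂
    nlinarith
  simp only at i1 i2 j1 j2
  -- the competitor of `u₀` is `v j`, shifted so that `u₀` starts at the time `-iT ≥ -jT`
  have hfp : ∀ τ w, f (τ + -(i * T)) w = f τ w := by
    intro τ w
    have hper : Function.Periodic f T := fun t => funext (hfper t)
    exact congrFun ((hper.nat_mul i).neg τ) w
  have hωp : ∀ τ, ωα (τ + -(i * T)) = ωα τ := by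
    intro τ
    have hper : Function.Periodic ωα T := hωper
    exact (hper.nat_mul i).neg τ
  have hW := ((h.1 j).affine (σ := 1) (b := -(n + ℓ i)) (τ := -(i * T)) (by norm_num) hfp).mono
    (J := Ioi 0) (fun τ hτ => by
      have : (0 : ℝ) < τ := hτ
      show -((j : ℝ) * T) - -(i * T) < τ
      linarith)
  have key := hu₀.crossing hW (fun z τ hτ => by
      have := h.2.1 j (1 * z + -(n + ℓ i)) (τ + -(i * T)) (by linarith)
      rwa [hωp] at this) hα hωc hM hC0 hC hit (x := x + n + ℓ i) (y := y + n + ℓ i)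
    (by linarith) (by
      have e1 : 1 * (x + n + ℓ i) + -(n + ℓ i) = x := by ring
      have e2 : t + i * T + -(i * T) = t := by ring
      rw [e1, e2]
      linarith)
  have e1 : 1 * (y + n + ℓ i) + -(n + ℓ i) = y := by ring
  have e2 : t + i * T + -(i * T) = t := by ring
  rw [e1, e2] at key
  linarith

/-- **Lemma 4.2.** Under (H1), if `u_∞(·,·;λ_k)` is a pulsating traveling front connecting
`ω_{k−1}` (at `−∞`) and `ω_k` (at `+∞`), then the `x`-independent entire solution `ω_k` is
steeper than any entire solution between `0` and `ω(α,·)`, and `ω_k ≡ u_∞(·,·;ω_k(0))`. -/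
theorem periodic_level_steepest
    (f : ℝ → ℝ → ℝ) (T α : ℝ) (ωsol : ℝ → ℝ → ℝ)
    (hT : 0 < T)
    (hf : ContDiff ℝ 2 (Function.uncurry f))
    (hfper : ∀ t u : ℝ, f (t + T) u = f t u)
    (hf0 : ∀ t : ℝ, f t 0 = 0)
    (hωinit : ∀ β : ℝ, ωsol β 0 = β)
    (hωode : ∀ β t : ℝ, HasDerivAt (ωsol β) (f t (ωsol β t)) t)
    (hα : 0 < α) (hαfix : ωsol α T = α)
    (hαper : ∀ t : ℝ, ωsol α (t + T) = ωsol α t)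
    (hαpos : ∀ t : ℝ, 0 < ωsol α t)
    (hH1 : HypH1 f α (ωsol α))
    (u₀ : ℝ → ℝ → ℝ) (hu₀ : IsHeavisideSol f α 0 (ωsol α) u₀)
    (lamk : ℝ) (hlamk : lamk ∈ Set.Ioo 0 α)
    (ℓk : ℕ → ℝ) (hℓk : ∀ j : ℕ, 1 ≤ j → u₀ (ℓk j) ((j : ℝ) * T) = lamk)
    (Uk : ℝ → ℝ → ℝ) (hUk : IsULimit u₀ ℓk T Uk)
    (ωkm1 ωk : ℝ → ℝ) (ck : ℝ)
    (hωkm1 : IsPeriodicSol f T ωkm1) (hωk : IsPeriodicSol f T ωk)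
    (horder : ∀ t : ℝ, 0 < ωk t ∧ ωk t < ωkm1 t)
    (hfront : IsPulsatingFront f T ωkm1 ωk Uk ck) :
    (∀ w : ℝ → ℝ → ℝ, IsSolOn f w Set.univ →
      (∀ x t : ℝ, 0 ≤ w x t ∧ w x t ≤ ωsol α t) →
      Steeper T (fun _ t => ωk t) w) ∧
    (∀ (ℓ' : ℕ → ℝ) (V : ℝ → ℝ → ℝ),
      (∀ j : ℕ, 1 ≤ j → u₀ (ℓ' j) ((j : ℝ) * T) = ωk 0) →
      IsULimit u₀ ℓ' T V → ∀ x t : ℝ, V x t = ωk t) := by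
  have hωc : Continuous (ωsol α) :=
    continuous_iff_continuousAt.2 fun t => (hωode α t).continuousAt
  have hψc : Continuous ωk := continuous_iff_continuousAt.2 fun t => (hωk.1 t).continuousAt
  have hωP : Function.Periodic (ωsol α) T := hαper
  have hψP : Function.Periodic ωk T := hωk.2
  have hfP : Function.Periodic f T := fun t => funext (hfper t)
  obtain ⟨M₁, hM₁⟩ := (hωP.isBounded_of_continuous hT.ne' hωc).exists_norm_le
  obtain ⟨M₂, hM₂⟩ := (hψP.isBounded_of_continuous hT.ne' hψc).exists_norm_le
  set M := max M₁ M₂ with hMdef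
  have hM : ∀ t, ωsol α t ≤ M := fun t =>
    ((le_abs_self _).trans (hM₁ _ ⟨t, rfl⟩)).trans (le_max_left _ _)
  have hMψ : ∀ t, ωk t ≤ M := fun t =>
    ((le_abs_self _).trans (hM₂ _ ⟨t, rfl⟩)).trans (le_max_right _ _)
  obtain ⟨C, hC0, hC⟩ := exists_lip M hT hf hfper
  -- a limit of solutions that touches `ωk` once coincides with it
  have rigid : ∀ (v : ℕ → ℝ → ℝ → ℝ) (V : ℝ → ℝ → ℝ), ApproxSol f T (ωsol α) v V →
      ∀ x₁ t₁, V x₁ t₁ = ωk t₁ → ∀ x t, V x t = ωk t := by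
    intro v V hV x₁ t₁ h1 x t
    have hlim : LinLimit C M (fun j x t => v j x t - ωk t) (fun x t => V x t - ωk t) := by
      refine ⟨fun a => ?_, fun K hK ε hε => ?_⟩
      · obtain ⟨J, hJ⟩ := exists_nat_gt (-a / T)
        refine ⟨J, fun j hj => ?_⟩
        have haj : -((j : ℝ) * T) ≤ a := by
          have h1 : -a < J * T := (div_lt_iff₀ hT).1 hJ
          have h2 : (J : ℝ) ≤ j := by exact_mod_cast hj
          nlinarith
        refine ((hV.1 j).mono (fun τ hτ => lt_of_le_of_lt haj hτ)).linSol_sub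
          (w := fun _ t => ωk t) (a := a) (IsSolOn.of_ode hf.continuous hωk.1 (Ioi a)) hC ?_ ?_
        · intro x t ht
          have := hV.2.1 j x t (by linarith)
          exact ⟨this.1, this.2.trans (hM t)⟩
        · exact fun x t _ => ⟨(horder t).1.le, hMψ t⟩
      · obtain ⟨J, hJ⟩ := hV.2.2 K hK ε hε
        refine ⟨J, fun j hj p hp => ?_⟩
        simpa using hJ j hj p hp
    have hright : ∀ {t x y : ℝ}, x < y → ωk t < V x t → ωk t ≤ V y t := fun hxy hx =>
      hV.ge_right hT hfper hαper hu₀ (hωinit α) hωc hM hC0 hC hUk hfront.2.2.2 hxy hx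
    have hleft : ∀ {t x y : ℝ}, y < x → ωk t < V x t → ωk t ≤ V y t := by
      intro t x y hxy hx
      have := hV.reflect.ge_right hT hfper hαper hu₀ (hωinit α) hωc hM hC0 hC hUk hfront.2.2.2
        (t := t) (x := -x) (y := -y) (by linarith) (by simpa using hx)
      simpa using this
    have hsign : ∀ t, (∀ x, 0 ≤ V x t - ωk t) ∨ (∀ x, V x t - ωk t ≤ 0) := by
      intro t
      by_cases hex : ∃ x, ωk t < V x t
      · obtain ⟨x, hx⟩ := hex
        left
        intro y
        rcases lt_trichotomy x y with h | h | h
        · linarith [hright h hx]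
        · rw [← h]; linarith
        · linarith [hleft h hx]
      · push Not at hex
        right
        intro y
        linarith [hex y]
    have := hlim.eq_zero hC0 hsign (x₁ := x₁) (t₁ := t₁) (by simp [h1]) x t
    linarith
  refine ⟨fun w hw hwb t' x₁ k hk => Or.inl fun x t => ?_, fun ℓ' V hℓ' hV x t => ?_⟩
  · have hkf : ∀ t u, f (t + k * T) u = f t u := fun t u => congrFun (hfP.int_mul k t) u
    have hA : ApproxSol f T (ωsol α) (fun _ x t => w x (t + k * T)) (fun x t => w x (t + k * T)) := by
      refine ⟨fun j => ?_, fun j x t _ => ?_, fun K _ ε hε => ⟨0, fun j _ p _ => by simpa using hε⟩⟩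
      · simpa using (hw.mono (subset_univ (Ioi (-((j : ℝ) * T) + k * T)))).affine
          (σ := 1) (b := 0) (τ := k * T) (by norm_num) hkf
      · have := hwb x (t + k * T)
        rwa [hωP.int_mul k t] at this
    exact (rigid _ _ hA x₁ t' hk.symm x (t + t')).symm
  · have hA : ApproxSol f T (ωsol α) (fun j x t => u₀ (x + ℓ' j) (t + j * T)) V := by
      refine ⟨fun j => ?_, fun j x t ht => ?_, hV⟩
      · simpa using hu₀.1.affine (σ := 1) (b := ℓ' j) (τ := j * T) (by norm_num)
          (fun t u => congrFun (hfP.nat_mul j t) u)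
      · have := hu₀.2.1 (x + ℓ' j) (t + j * T) (by linarith)
        rwa [hωP.nat_mul j t] at this
    refine rigid _ V hA 0 0 ?_ x t
    by_contra hne
    obtain ⟨J, hJ⟩ := hV {(0, 0)} isCompact_singleton |V 0 0 - ωk 0|
      (abs_pos.2 (sub_ne_zero.2 hne))
    have := hJ (max J 1) (le_max_left _ _) (0, 0) rfl
    simp only [zero_add] at this
    rw [hℓ' (max J 1) (le_max_right _ _), abs_sub_comm] at this
    exact lt_irrefl _ this

end
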